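/- Let A be an n-by-n reciprocal matrix and let v and w be positive n-vectors. Then |w_i/w_j − a_ij| = |v_i/v_j − a_ij| for all indices i, j (i.e., |D(A,w)| = |D(A,v)| entrywise) if and only if there exists a positive real constant c such that v = c·w. -/

import Mathlib

/-- An n-by-n positive matrix is reciprocal if `A j i = 1 / A i j` for all `i, j`. -/
def Reciprocal {n : ℕ} (A : Matrix (Fin n) (Fin n) ℝ) : Prop :=
  (∀ i j, 0 < A i j) ∧ ∀ i j, A j i = 1 / A i j

/-!
The `(i, j)` and `(j, i)` entries together say that the ratios `x = w i / w j` and `y = v i / v j`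
are equidistant from `a = A i j`, and that `x⁻¹` and `y⁻¹` are equidistant from `a⁻¹`. Since
`|x⁻¹ - a⁻¹| = |x - a| / |x * a|`, either `x = a = y` or `|x| = |y|`, and in the latter case
`x = -y` would place `a` at the midpoint `0`. So all ratios of `v` and `w` agree.
-/

section Proportional

variable {ι K : Type*}

theorem forall_div_eq_div_iff_exists_eq_smul [CommGroupWithZero K] {v w : ι → K}
    (hv : ∀ i, v i ≠ 0) (hw : ∀ i, w i ≠ 0) :
    (∀ i j, w i / w j = v i / v j) ↔ ∃ c : K, c ≠ 0 ∧ v = c • w := by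
  constructor
  · intro h
    rcases isEmpty_or_nonempty ι with _ | ⟨⟨k⟩⟩
    · exact ⟨1, one_ne_zero, Subsingleton.elim _ _⟩
    · refine ⟨v k / w k, div_ne_zero (hv k) (hw k), funext fun i => ?_⟩
      calc v i = v i / v k * v k := (div_mul_cancel₀ _ (hv k)).symm
        _ = w i / w k * v k := by rw [h i k]
        _ = v k / w k * w i := by rw [div_mul_eq_mul_div, div_mul_eq_mul_div, mul_comm]
  · rintro ⟨c, hc, rfl⟩ i j
    exact (mul_div_mul_left _ _ hc).symm

theorem exists_ne_zero_eq_smul_iff_exists_pos [Semiring K] [LinearOrder K] [IsStrictOrderedRing K]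
    {v w : ι → K} (hv : ∀ i, 0 < v i) (hw : ∀ i, 0 < w i) :
    (∃ c : K, c ≠ 0 ∧ v = c • w) ↔ ∃ c : K, 0 < c ∧ v = c • w := by
  constructor
  · rintro ⟨c, -, rfl⟩
    rcases isEmpty_or_nonempty ι with _ | ⟨⟨k⟩⟩
    · exact ⟨1, one_pos, Subsingleton.elim _ _⟩
    · exact ⟨c, pos_of_mul_pos_left (hv k) (hw k).le, rfl⟩
  · rintro ⟨c, hc, h⟩
    exact ⟨c, hc.ne', h⟩

end Proportional

section OrderedField

variable {ι K : Type*} [Field K] [LinearOrder K] [IsStrictOrderedRing K]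

theorem abs_inv_sub_inv {x a : K} (hx : x ≠ 0) (ha : a ≠ 0) :
    |x⁻¹ - a⁻¹| = |x - a| / |x * a| := by
  rw [inv_sub_inv hx ha, abs_div, abs_sub_comm]

theorem eq_of_abs_sub_eq_of_abs_inv_sub_inv_eq {x y a : K} (hx : x ≠ 0) (hy : y ≠ 0) (ha : a ≠ 0)
    (h : |x - a| = |y - a|) (h_inv : |x⁻¹ - a⁻¹| = |y⁻¹ - a⁻¹|) : x = y := by
  rcases eq_or_ne x a with rfl | hxa
  · have h_zero : |y - x| = 0 := by rw [← h, sub_self, abs_zero]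
    exact (eq_of_abs_sub_eq_zero h_zero).symm
  · have h_abs : |x| = |y| := by
      have h_dist : |x - a| ≠ 0 := abs_ne_zero.2 (sub_ne_zero.2 hxa)
      rw [abs_inv_sub_inv hx ha, abs_inv_sub_inv hy ha, ← h, div_eq_mul_inv, div_eq_mul_inv,
        mul_right_inj' h_dist, inv_inj, abs_mul, abs_mul] at h_inv
      exact mul_right_cancel₀ (abs_ne_zero.2 ha) h_inv
    refine (abs_eq_abs.1 h_abs).resolve_right fun h_neg => ?_
    rcases abs_eq_abs.1 h with h_same | h_opp
    · exact hy (by linarith)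
    · exact ha (by linarith)

theorem forall_abs_div_sub_eq_iff_forall_div_eq_div {A : Matrix ι ι K}
    (hA : ∀ i j, A i j * A j i = 1) {v w : ι → K} (hv : ∀ i, v i ≠ 0) (hw : ∀ i, w i ≠ 0) :
    (∀ i j, |w i / w j - A i j| = |v i / v j - A i j|) ↔ ∀ i j, w i / w j = v i / v j := by
  refine ⟨fun h i j => ?_, fun h i j => by rw [h i j]⟩
  have h_inv : |(w i / w j)⁻¹ - (A i j)⁻¹| = |(v i / v j)⁻¹ - (A i j)⁻¹| := by
    simpa only [inv_div, inv_eq_of_mul_eq_one_right (hA i j)] using h j i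
  exact eq_of_abs_sub_eq_of_abs_inv_sub_inv_eq (div_ne_zero (hw i) (hw j))
    (div_ne_zero (hv i) (hv j)) (left_ne_zero_of_mul_eq_one (hA i j)) (h i j) h_inv

theorem stmt_0_general {A : Matrix ι ι K} (hA : ∀ i j, A i j * A j i = 1) {v w : ι → K}
    (hv : ∀ i, v i ≠ 0) (hw : ∀ i, w i ≠ 0) :
    (∀ i j, |w i / w j - A i j| = |v i / v j - A i j|) ↔ ∃ c : K, c ≠ 0 ∧ v = c • w :=
  (forall_abs_div_sub_eq_iff_forall_div_eq_div hA hv hw).trans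
    (forall_div_eq_div_iff_exists_eq_smul hv hw)

end OrderedField

theorem Reciprocal.mul_eq_one {n : ℕ} {A : Matrix (Fin n) (Fin n) ℝ} (hA : Reciprocal A)
    (i j : Fin n) : A i j * A j i = 1 := by
  rw [hA.2 i j, mul_one_div_cancel (hA.1 i j).ne']

/-- |D(A,w)| = |D(A,v)| entrywise iff v is a positive scalar multiple of w. -/
theorem stmt_0 {n : ℕ} (A : Matrix (Fin n) (Fin n) ℝ) (hA : Reciprocal A)
    (v w : Fin n → ℝ) (hv : ∀ i, 0 < v i) (hw : ∀ i, 0 < w i) :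
    (∀ i j, |w i / w j - A i j| = |v i / v j - A i j|) ↔
      ∃ c : ℝ, 0 < c ∧ v = fun i => c * w i :=
  (stmt_0_general hA.mul_eq_one (fun i => (hv i).ne') fun i => (hw i).ne').trans
    (exists_ne_zero_eq_smul_iff_exists_pos hv hw)
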